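/- Assume f r ≥ 0 and Q r ≥ 0 for every r ∈ I, that Σ_{r : β r = b} f r = d b and d b > 0 for every b ∈ B. Then Nguyen's UEIP condition holds if and only if there exists μ : B → ℝ such that (i) for every r ∈ I, Q r > 0 implies c r ≥ μ(β r), and (ii) for every r ∈ I, f r > 0 implies μ(β r) ≥ c r. -/

import Mathlib

open Finset

/-! Both conditions say that, within each class, no used route (positive flow) costs more than an
available one (positive capacity). For finitely many routes, the cost of the dearest used route of
the class then serves as the threshold; a class with no used route takes any lower bound of its
available costs. -/

theorem upperBounds_inter_lowerBounds_nonempty_of_forall_le {α : Type*} [LinearOrder α]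
    {s t : Set α} (hs : s.Finite) (ht : BddBelow t) (hst : ∀ x ∈ s, ∀ y ∈ t, x ≤ y) :
    (upperBounds s ∩ lowerBounds t).Nonempty := by
  rcases s.eq_empty_or_nonempty with rfl | hne
  · rw [upperBounds_empty, Set.univ_inter]
    exact ht
  · obtain ⟨m, hm, hmax⟩ := s.exists_max_image id hs hne
    exact ⟨m, hmax, hst m hm⟩

theorem exists_fiberwise_threshold_iff {I B α : Type*} [Finite I] [LinearOrder α] [Nonempty α]
    (β : I → B) (c : I → α) (p q : I → Prop) :
    (∃ μ : B → α, (∀ r, q r → μ (β r) ≤ c r) ∧ ∀ r, p r → c r ≤ μ (β r)) ↔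
      ∀ r r', β r' = β r → p r → q r' → c r ≤ c r' := by
  constructor
  · rintro ⟨μ, hle, hge⟩ r r' hβ hp hq
    calc c r ≤ μ (β r) := hge r hp
      _ = μ (β r') := by rw [hβ]
      _ ≤ c r' := hle r' hq
  · intro h
    have hμ (b : B) : ∃ m, m ∈ upperBounds (c '' {r | β r = b ∧ p r}) ∩
        lowerBounds (c '' {r | β r = b ∧ q r}) := by
      refine upperBounds_inter_lowerBounds_nonempty_of_forall_le
        (Set.toFinite _) (Set.toFinite _).bddBelow ?_
      rintro _ ⟨r, ⟨hr, hp⟩, rfl⟩ _ ⟨r', ⟨hr', hq⟩, rfl⟩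
      exact h r r' (hr'.trans hr.symm) hp hq
    choose μ hupper hlower using hμ
    exact ⟨μ, fun r hq ↦ hlower (β r) ⟨r, ⟨rfl, hq⟩, rfl⟩,
      fun r hp ↦ hupper (β r) ⟨r, ⟨rfl, hp⟩, rfl⟩⟩

section UEIP

variable {I B α M N : Type*} [Fintype I] [DecidableEq B] [LinearOrder α]

/-- The set `D(r)` of dominating routes: the strictly cheaper routes of the same class as `r`. -/
def dominatingRoutes (β : I → B) (c : I → α) (r : I) : Finset I :=
  univ.filter fun r' ↦ β r' = β r ∧ c r' < c r

/-- Nguyen's UEIP condition: a route carries no flow as soon as its dominating routes have positive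
total available capacity. Costs, flows and capacities may live in different ordered types. -/
def IsUEIP [Zero M] [AddCommMonoid N] [LT N] (β : I → B) (f : I → M) (c : I → α) (Q : I → N) :
    Prop :=
  ∀ r, 0 < ∑ r' ∈ dominatingRoutes β c r, Q r' → f r = 0

theorem sum_dominatingRoutes_pos_iff [AddCommMonoid N] [PartialOrder N] [AddLeftMono N]
    {β : I → B} {c : I → α} {Q : I → N} (hQ : ∀ r, 0 ≤ Q r) {r : I} :
    0 < ∑ r' ∈ dominatingRoutes β c r, Q r' ↔ ∃ r', β r' = β r ∧ c r' < c r ∧ 0 < Q r' := by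
  rw [sum_pos_iff_of_nonneg fun r' _ ↦ hQ r']
  simp only [dominatingRoutes, mem_filter_univ, and_assoc]

theorem isUEIP_iff_forall_le [Zero M] [PartialOrder M] [AddCommMonoid N] [PartialOrder N]
    [AddLeftMono N] {β : I → B} {f : I → M} {c : I → α} {Q : I → N}
    (hf : ∀ r, 0 ≤ f r) (hQ : ∀ r, 0 ≤ Q r) :
    IsUEIP β f c Q ↔ ∀ r r', β r' = β r → 0 < f r → 0 < Q r' → c r ≤ c r' := by
  simp only [IsUEIP, sum_dominatingRoutes_pos_iff hQ]
  constructor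
  · intro h r r' hβ hfr hQr'
    by_contra! hlt
    exact hfr.ne' (h r ⟨r', hβ, hlt, hQr'⟩)
  · intro h r ⟨r', hβ, hlt, hQr'⟩
    by_contra hne
    exact hlt.not_ge (h r r' hβ ((hf r).lt_of_ne' hne) hQr')

theorem stmt0_general [Nonempty α] [Zero M] [PartialOrder M] [AddCommMonoid N] [PartialOrder N]
    [AddLeftMono N] {β : I → B} {f : I → M} {c : I → α} {Q : I → N}
    (hf : ∀ r, 0 ≤ f r) (hQ : ∀ r, 0 ≤ Q r) :
    IsUEIP β f c Q ↔
      ∃ μ : B → α, (∀ r, 0 < Q r → μ (β r) ≤ c r) ∧ (∀ r, 0 < f r → c r ≤ μ (β r)) :=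
  (isUEIP_iff_forall_le hf hQ).trans (exists_fiberwise_threshold_iff β c _ _).symm

end UEIP

/-- Equivalence between Nguyen's UEIP condition and the threshold conditions (13a)-(13b). -/
theorem stmt0 {I B : Type*} [Fintype I] [Fintype B] [DecidableEq B]
    (β : I → B) (d : B → ℝ) (f c Q : I → ℝ)
    (hf : ∀ r, 0 ≤ f r) (hQ : ∀ r, 0 ≤ Q r)
    (hd : ∀ b, ∑ r ∈ univ.filter (fun r => β r = b), f r = d b)
    (hdpos : ∀ b, 0 < d b) :
    (∀ r : I, 0 < ∑ r' ∈ univ.filter (fun r' => β r' = β r ∧ c r' < c r), Q r' → f r = 0)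
    ↔ ∃ μ : B → ℝ,
        (∀ r, 0 < Q r → μ (β r) ≤ c r) ∧
        (∀ r, 0 < f r → c r ≤ μ (β r)) :=
  stmt0_general hf hQ
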